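/- Let (G, G⁺, Δ) be a support-preserving LCM-Garside structure. Then every x ∈ G admits a parabolic closure: there is a parabolic subgroup PC(x) of G with x ∈ PC(x) such that PC(x) ⊆ H for every parabolic subgroup H containing x. Moreover, if x is recurrent, then PC(x) = G_{Supp(x)}. -/

import Mathlib

open scoped Pointwise Classical

/-- A Garside structure on a group `G`: a submonoid `pos` of positive elements with
trivial units, prefix and suffix lattice operations, and a Garside element `delta`. -/
structure GarsideStructure (G : Type*) [Group G] where
  /-- the submonoid of positive elements -/
  pos : Submonoid G
  /-- the Garside element Δ -/
  delta : G
  /-- meet for the prefix order -/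
  meet : G → G → G
  /-- join for the prefix order -/
  join : G → G → G
  /-- meet for the suffix order -/
  rmeet : G → G → G
  /-- join for the suffix order -/
  rjoin : G → G → G
  units_triv : ∀ a : G, a ∈ pos → a⁻¹ ∈ pos → a = 1
  meet_le_left : ∀ a b : G, (meet a b)⁻¹ * a ∈ pos
  meet_le_right : ∀ a b : G, (meet a b)⁻¹ * b ∈ pos
  le_meet : ∀ a b c : G, c⁻¹ * a ∈ pos → c⁻¹ * b ∈ pos → c⁻¹ * meet a b ∈ pos
  le_join_left : ∀ a b : G, a⁻¹ * join a b ∈ pos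
  le_join_right : ∀ a b : G, b⁻¹ * join a b ∈ pos
  join_le : ∀ a b c : G, a⁻¹ * c ∈ pos → b⁻¹ * c ∈ pos → (join a b)⁻¹ * c ∈ pos
  rmeet_le_left : ∀ a b : G, a * (rmeet a b)⁻¹ ∈ pos
  rmeet_le_right : ∀ a b : G, b * (rmeet a b)⁻¹ ∈ pos
  le_rmeet : ∀ a b c : G, a * c⁻¹ ∈ pos → b * c⁻¹ ∈ pos → rmeet a b * c⁻¹ ∈ pos
  rjoin_le_left : ∀ a b : G, rjoin a b * a⁻¹ ∈ pos
  rjoin_le_right : ∀ a b : G, rjoin a b * b⁻¹ ∈ pos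
  rjoin_le : ∀ a b c : G, c * a⁻¹ ∈ pos → c * b⁻¹ ∈ pos → c * (rjoin a b)⁻¹ ∈ pos
  delta_pos : delta ∈ pos
  /-- Δ is balanced: its positive prefixes coincide with its positive suffixes -/
  delta_balanced : ∀ s : G, s ∈ pos → (s⁻¹ * delta ∈ pos ↔ delta * s⁻¹ ∈ pos)
  /-- the set of simple elements (divisors of Δ) is finite -/
  divDelta_finite : {s : G | s ∈ pos ∧ s⁻¹ * delta ∈ pos}.Finite
  /-- the simple elements generate `G` -/
  divDelta_generates : Subgroup.closure {s : G | s ∈ pos ∧ s⁻¹ * delta ∈ pos} = ⊤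
  /-- the atoms generate the positive monoid -/
  atoms_generate :
    Submonoid.closure {a : G | a ∈ pos ∧ a ≠ 1 ∧
      ∀ b ∈ pos, b⁻¹ * a ∈ pos → b = 1 ∨ b = a} = pos
  /-- every atom divides Δ -/
  atoms_divide_delta : ∀ a : G, a ∈ pos → a ≠ 1 →
    (∀ b ∈ pos, b⁻¹ * a ∈ pos → b = 1 ∨ b = a) → a⁻¹ * delta ∈ pos
  /-- every element is bounded below and above by powers of Δ -/
  delta_bounds : ∀ x : G, ∃ p q : ℤ, p ≤ q ∧ (delta ^ p)⁻¹ * x ∈ pos ∧ x⁻¹ * delta ^ q ∈ pos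
  /-- conjugation by Δ maps the positive monoid bijectively onto itself -/
  conj_delta : ∀ a : G, a ∈ pos ↔ delta * a * delta⁻¹ ∈ pos
  /-- some positive power of Δ is central -/
  central_power : ∃ n : ℕ, 0 < n ∧ delta ^ n ∈ Subgroup.center G
  /-- no infinite strictly decreasing (for the prefix order) sequence of positive elements -/
  no_infinite_descent : ¬ ∃ f : ℕ → G, (∀ n, f n ∈ pos) ∧
    ∀ n, (f (n + 1))⁻¹ * f n ∈ pos ∧ f (n + 1) ≠ f n

namespace GarsideStructure

variable {G : Type*} [Group G] (S : GarsideStructure G)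

/-- the prefix order: `a ≼ b` iff `a⁻¹ * b` is positive -/
def le (a b : G) : Prop := a⁻¹ * b ∈ S.pos

/-- the set of positive prefixes of an element -/
def Div (d : G) : Set G := {s : G | s ∈ S.pos ∧ S.le s d}

/-- atoms: nontrivial positive elements with no nontrivial proper positive prefix -/
def IsAtomic (a : G) : Prop :=
  a ∈ S.pos ∧ a ≠ 1 ∧ ∀ b ∈ S.pos, S.le b a → b = 1 ∨ b = a

/-- the set of atoms -/
def atoms : Set G := {a : G | S.IsAtomic a}

/-- the left denominator of `x`: `D_L x = (1 ∧ x)⁻¹` -/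
def DL (x : G) : G := (S.meet 1 x)⁻¹

/-- the left numerator of `x`: `N_L x = D_L x * x` -/
def NL (x : G) : G := S.DL x * x

/-- the (left) swap `φ(x) = N_L x * (D_L x)⁻¹ = D_L x * x * (D_L x)⁻¹` -/
def swap (x : G) : G := S.DL x * x * (S.DL x)⁻¹

/-- an element is recurrent if it is fixed by some positive iterate of the swap map -/
def Recurrent (x : G) : Prop := ∃ m : ℕ, 0 < m ∧ S.swap^[m] x = x

/-- the set `R(x)` of recurrent conjugates of `x` -/
def Rset (x : G) : Set G := {y : G | IsConj x y ∧ S.Recurrent y}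

/-- the set `C⁺(x)` of positive conjugates of `x` -/
def Cpos (x : G) : Set G := {y : G | IsConj x y ∧ y ∈ S.pos}

/-- the set `C⁻(x)` of negative conjugates of `x` -/
def Cneg (x : G) : Set G := {y : G | IsConj x y ∧ y⁻¹ ∈ S.pos}

/-- the transport of `u` at `y`: with `y = a⁻¹ b` reduced, `u^{(1)} = (a u) ∧ (b u)` -/
def transport (y u : G) : G := S.meet (S.DL y * u) (S.NL y * u)

/-- `Δ_X`: the least upper bound for the prefix order of a set `X` (`1` if there is none) -/
noncomputable def deltaOf (X : Set G) : G :=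
  if h : ∃ d : G, (∀ x ∈ X, S.le x d) ∧ ∀ c : G, (∀ x ∈ X, S.le x c) → S.le d c
  then h.choose else 1

/-- the closure `X̄ = Div(Δ_X) ∩ 𝒜` of a set of atoms -/
noncomputable def closureOf (X : Set G) : Set G := S.Div (S.deltaOf X) ∩ S.atoms

/-- the subgroup `G_X` generated by the closure of `X` -/
noncomputable def GX (X : Set G) : Subgroup G := Subgroup.closure (S.closureOf X)

/-- the support of an element: the closure of the set of atoms appearing in atom
factorizations of its left denominator and left numerator -/
noncomputable def supp (x : G) : Set G :=
  if h : ∃ p : List G × List G,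
      (∀ a ∈ p.1, a ∈ S.atoms) ∧ (∀ a ∈ p.2, a ∈ S.atoms) ∧
      p.1.prod = S.DL x ∧ p.2.prod = S.NL x
  then S.closureOf ({a : G | a ∈ h.choose.1} ∪ {a : G | a ∈ h.choose.2})
  else ∅

/-- an LCM-Garside structure -/
structure IsLCM : Prop where
  delta_eq : S.delta = S.deltaOf S.atoms
  balanced : ∀ X ⊆ S.atoms, ∀ s ∈ S.pos,
    (S.le s (S.deltaOf X) ↔ S.deltaOf X * s⁻¹ ∈ S.pos)
  div_eq : ∀ X ⊆ S.atoms,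
    S.Div (S.deltaOf X) = S.Div S.delta ∩ {g : G | g ∈ S.GX X ∧ g ∈ S.pos}
  factor_closed : ∀ X ⊆ S.atoms, ∀ g : G, g ∈ S.GX X → g ∈ S.pos →
    ∀ a b : G, a ∈ S.pos → b ∈ S.pos → g = a * b → a ∈ S.GX X ∧ b ∈ S.GX X
  lattice_closed : ∀ X ⊆ S.atoms, ∀ a b : G, a ∈ S.GX X → b ∈ S.GX X →
    S.meet a b ∈ S.GX X ∧ S.join a b ∈ S.GX X
  fraction_closed : ∀ X ⊆ S.atoms, ∀ g : G, g ∈ S.GX X →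
    S.DL g ∈ S.GX X ∧ S.NL g ∈ S.GX X

/-- a standard parabolic subgroup: the subgroup generated by a saturated set of atoms -/
noncomputable def IsStandardParabolic (H : Subgroup G) : Prop :=
  ∃ X : Set G, X ⊆ S.atoms ∧ S.closureOf X = X ∧ H = S.GX X

/-- a parabolic subgroup: a conjugate of a standard parabolic subgroup -/
noncomputable def IsParabolic (H : Subgroup G) : Prop :=
  ∃ (P : Subgroup G) (c : G), S.IsStandardParabolic P ∧
    H = Subgroup.map (MulAut.conj c).toMonoidHom P

/-- the structure is support-preserving if conjugations between positive elements
conjugate the corresponding parabolic subgroups of the supports -/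
noncomputable def SupportPreserving : Prop :=
  ∀ y ∈ S.pos, ∀ z ∈ S.pos, ∀ α : G, α⁻¹ * y * α = z →
    Subgroup.map (MulAut.conj α⁻¹).toMonoidHom (S.GX (S.supp y)) = S.GX (S.supp z)

/-- `P` is the parabolic closure of `x` -/
noncomputable def IsParabolicClosure (x : G) (P : Subgroup G) : Prop :=
  S.IsParabolic P ∧ x ∈ P ∧ ∀ H : Subgroup G, S.IsParabolic H → x ∈ H → P ≤ H

end GarsideStructure


namespace GarsideStructure

variable {G : Type*} [Group G] (S : GarsideStructure G)

section Order

theorem le_refl (a : G) : S.le a a := by simp [le, S.pos.one_mem]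

variable {S}

theorem le_trans {a b c : G} (hab : S.le a b) (hbc : S.le b c) : S.le a c := by
  have := S.pos.mul_mem hab hbc
  simpa [le, mul_assoc] using this

theorem le_antisymm {a b : G} (hab : S.le a b) (hba : S.le b a) : a = b := by
  have := S.units_triv (a⁻¹ * b) hab (by simpa [le] using hba)
  exact inv_mul_eq_one.mp this

theorem mul_le_mul_left_iff {a b : G} (g : G) : S.le (g * a) (g * b) ↔ S.le a b := by
  simp [le, mul_assoc]

theorem le_mul_of_pos (a : G) {b : G} (hb : b ∈ S.pos) : S.le a (a * b) := by
  simpa [le] using hb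

theorem meet_le_left' (a b : G) : S.le (S.meet a b) a := S.meet_le_left a b

theorem meet_le_right' (a b : G) : S.le (S.meet a b) b := S.meet_le_right a b

theorem le_meet' {a b c : G} (ha : S.le c a) (hb : S.le c b) : S.le c (S.meet a b) :=
  S.le_meet a b c ha hb

variable (S) in
theorem conj_delta_zpow (k : ℤ) (a : G) :
    a ∈ S.pos ↔ S.delta ^ k * a * (S.delta ^ k)⁻¹ ∈ S.pos := by
  induction k generalizing a with
  | zero => simp
  | succ k ih =>
    rw [S.conj_delta a, ih]
    simp [zpow_add, mul_assoc]
  | pred k ih =>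
    rw [S.conj_delta (S.delta ^ (-(k : ℤ) - 1) * a * _), ih]
    have : S.delta ^ (-(k : ℤ)) = S.delta * S.delta ^ (-(k : ℤ) - 1) := by
      rw [← zpow_one_add]; congr 1; ring
    simp [this, mul_assoc]

theorem mul_delta_zpow_le_iff {a b : G} (k : ℤ) :
    S.le (a * S.delta ^ k) (b * S.delta ^ k) ↔ S.le a b := by
  rw [le, le, S.conj_delta_zpow k]
  simp [mul_assoc]

theorem delta_zpow_le_mul {a : G} (ha : a ∈ S.pos) (k : ℤ) :
    S.le (S.delta ^ k) (a * S.delta ^ k) := by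
  have : S.le (1 * S.delta ^ k) (a * S.delta ^ k) :=
    (mul_delta_zpow_le_iff k).2 (by simpa [le] using ha)
  simpa using this

theorem le_meet_mul_delta_zpow {a b c : G} (k : ℤ) (ha : S.le c (a * S.delta ^ k))
    (hb : S.le c (b * S.delta ^ k)) : S.le c (S.meet a b * S.delta ^ k) := by
  have h := (mul_delta_zpow_le_iff (S := S) (a := c * S.delta ^ (-k)) (b := S.meet a b) k).2
    (le_meet' ((mul_delta_zpow_le_iff k).1 (by simpa using ha))
      ((mul_delta_zpow_le_iff k).1 (by simpa using hb)))
  simpa using h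

theorem delta_zpow_mono {m n : ℤ} (h : m ≤ n) : S.le (S.delta ^ m) (S.delta ^ n) := by
  obtain ⟨k, rfl⟩ := Int.le.dest h
  rw [zpow_add]
  exact le_mul_of_pos _ (by simpa using S.pos.pow_mem S.delta_pos k)

variable (S) in
theorem finite_one_le_delta_pow (n : ℕ) :
    {g : G | S.le 1 g ∧ S.le g (S.delta ^ n)}.Finite := by
  induction n with
  | zero =>
    refine (Set.finite_singleton (1 : G)).subset ?_
    rintro g ⟨h1, h2⟩
    exact (le_antisymm h1 (by simpa using h2)).symm
  | succ n ih =>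
    refine (Set.Finite.image2 (fun a b => a * b) S.divDelta_finite ih).subset ?_
    rintro g ⟨h1, h2⟩
    refine ⟨S.meet g S.delta, ⟨?_, S.meet_le_right _ _⟩, (S.meet g S.delta)⁻¹ * g,
      ⟨by simpa [le] using S.meet_le_left g S.delta, ?_⟩, by simp⟩
    · have := le_meet' h1 (b := S.delta) (by simpa [le] using S.delta_pos)
      simpa [le] using this
    · have h := le_meet_mul_delta_zpow (S := S) (a := g) (b := S.delta) (c := g) n
        (le_mul_of_pos _ (by simpa using S.pos.pow_mem S.delta_pos n))
        (by simpa [pow_succ'] using h2)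
      rw [← mul_le_mul_left_iff (S.meet g S.delta)]
      simpa using h

variable (S) in
theorem finite_delta_zpow_interval {p q : ℤ} (hpq : p ≤ q) :
    {g : G | S.le (S.delta ^ p) g ∧ S.le g (S.delta ^ q)}.Finite := by
  obtain ⟨n, rfl⟩ := Int.le.dest hpq
  refine ((S.finite_one_le_delta_pow n).image (S.delta ^ p * ·)).subset ?_
  rintro g ⟨h1, h2⟩
  refine ⟨(S.delta ^ p)⁻¹ * g, ⟨?_, ?_⟩, by simp⟩
  · simpa [le] using h1
  · rw [← mul_le_mul_left_iff (S.delta ^ p)]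
    simpa [zpow_add] using h2

end Order

section Swap

theorem DL_pos (x : G) : S.DL x ∈ S.pos := by
  simpa [DL] using S.meet_le_left 1 x

theorem NL_pos (x : G) : S.NL x ∈ S.pos := S.meet_le_right 1 x

theorem DL_inv (x : G) : (S.DL x)⁻¹ = S.meet 1 x := inv_inv _

theorem eq_DL_inv_mul_NL (x : G) : x = (S.DL x)⁻¹ * S.NL x := by simp [NL]

theorem le_DL_inv_mul_delta_zpow {x c : G} (k : ℤ) (h1 : S.le c (S.delta ^ k))
    (hx : S.le c (x * S.delta ^ k)) : S.le c ((S.DL x)⁻¹ * S.delta ^ k) := by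
  rw [DL_inv]
  exact le_meet_mul_delta_zpow k (by simpa using h1) hx

/-- The swap preserves every interval `[Δ^p, Δ^q]` with `p ≤ 0 ≤ q`. -/
theorem swap_mem_interval {p q : ℤ} (hp : p ≤ 0) (hq : 0 ≤ q) {x : G}
    (h1 : S.le (S.delta ^ p) x) (h2 : S.le x (S.delta ^ q)) :
    S.le (S.delta ^ p) (S.swap x) ∧ S.le (S.swap x) (S.delta ^ q) := by
  have hp1 : S.le (S.delta ^ p) 1 := by simpa using delta_zpow_mono (S := S) hp
  constructor
  · have hm : S.le (S.delta ^ p) (S.DL x)⁻¹ := by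
      rw [DL_inv]; exact le_meet' hp1 h1
    have := (mul_le_mul_left_iff (S.NL x)).2 hm
    exact le_trans (delta_zpow_le_mul (S.NL_pos x) p) this
  · have hN : S.le (S.NL x) (S.delta ^ q) := by
      have h := S.le_DL_inv_mul_delta_zpow (x := x) (c := x) q h2
        (le_mul_of_pos _ (by
          have := delta_zpow_mono (S := S) hq
          simpa [le] using this))
      have := (mul_le_mul_left_iff (S.DL x)).2 h
      simpa [NL] using this
    have := S.pos.mul_mem (S.DL_pos x) hN
    simpa [le, swap, NL, mul_assoc] using this

/-- The element `a_{n-1} ⋯ a_0` conjugating `x` to its `n`-th iterated swap, where `a_i` is the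
left denominator of the `i`-th iterate. -/
def swapDen : ℕ → G → G
  | 0, _ => 1
  | n + 1, x => swapDen n (S.swap x) * S.DL x

/-- The element `b_{n-1} ⋯ b_0`, where `b_i` is the left numerator of the `i`-th iterated swap. -/
def swapNum : ℕ → G → G
  | 0, _ => 1
  | n + 1, x => swapNum n (S.swap x) * S.NL x

theorem swapDen_pos (n : ℕ) (x : G) : S.swapDen n x ∈ S.pos := by
  induction n generalizing x with
  | zero => exact S.pos.one_mem
  | succ n ih => exact S.pos.mul_mem (ih _) (S.DL_pos x)

theorem swapNum_pos (n : ℕ) (x : G) : S.swapNum n x ∈ S.pos := by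
  induction n generalizing x with
  | zero => exact S.pos.one_mem
  | succ n ih => exact S.pos.mul_mem (ih _) (S.NL_pos x)

theorem swap_iterate_eq (n : ℕ) (x : G) :
    S.swap^[n] x = S.swapDen n x * x * (S.swapDen n x)⁻¹ := by
  induction n generalizing x with
  | zero => simp [swapDen]
  | succ n ih => rw [Function.iterate_succ_apply, ih]; simp [swapDen, swap, mul_assoc]

theorem swapDen_add (m n : ℕ) (x : G) :
    S.swapDen (m + n) x = S.swapDen m (S.swap^[n] x) * S.swapDen n x := by
  induction n generalizing x with
  | zero => simp [swapDen]
  | succ n ih => rw [← add_assoc, swapDen, ih, swapDen, Function.iterate_succ_apply, mul_assoc]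

theorem exists_recurrent_iterate (x : G) : ∃ n, S.Recurrent (S.swap^[n] x) := by
  obtain ⟨p, q, -, h1, h2⟩ := S.delta_bounds x
  have hfin := S.finite_delta_zpow_interval (p := min p 0) (q := max q 0) (by omega)
  have hmem : ∀ n, S.swap^[n] x ∈
      {g : G | S.le (S.delta ^ min p 0) g ∧ S.le g (S.delta ^ max q 0)} := by
    intro n
    induction n with
    | zero => exact ⟨le_trans (delta_zpow_mono (min_le_left _ _)) h1,
        le_trans h2 (delta_zpow_mono (le_max_left _ _))⟩
    | succ n ih =>
      rw [Function.iterate_succ_apply']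
      exact S.swap_mem_interval (min_le_right _ _) (le_max_right _ _) ih.1 ih.2
  obtain ⟨i, j, hij, h⟩ := hfin.exists_lt_map_eq_of_forall_mem hmem
  refine ⟨i, j - i, by omega, ?_⟩
  rw [← Function.iterate_add_apply, Nat.sub_add_cancel hij.le, h]

/-- One step of transport preserves the intervals `[Δ^p, Δ^q]`. -/
theorem transport_mem_interval {p q : ℤ} {x y α : G} (hα : α * y = x * α)
    (h1 : S.le (S.delta ^ p) α) (h2 : S.le α (S.delta ^ q)) :
    S.le (S.delta ^ p) (S.DL x * α * (S.DL y)⁻¹) ∧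
      S.le (S.DL x * α * (S.DL y)⁻¹) (S.delta ^ q) := by
  have hN : S.DL x * α * y = S.NL x * α := by rw [mul_assoc, hα, NL, mul_assoc]
  have lower : ∀ a ∈ S.pos, S.le (S.delta ^ p) (a * α) := fun a ha =>
    le_trans (delta_zpow_le_mul ha p) ((mul_le_mul_left_iff a).2 h1)
  constructor
  · rw [DL_inv, ← mul_le_mul_left_iff (S.DL x * α)⁻¹, inv_mul_cancel_left]
    refine le_meet' ?_ ?_
    · rw [← mul_le_mul_left_iff (S.DL x * α), mul_inv_cancel_left, mul_one]
      exact lower _ (S.DL_pos x)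
    · rw [← mul_le_mul_left_iff (S.DL x * α), hN, mul_inv_cancel_left]
      exact lower _ (S.NL_pos x)
  · rw [mul_assoc, ← mul_le_mul_left_iff (S.DL x)⁻¹, inv_mul_cancel_left]
    refine S.le_DL_inv_mul_delta_zpow q ?_ ?_
    · have : S.le (α * (S.DL y)⁻¹) (α * 1) :=
        (mul_le_mul_left_iff α).2 (by rw [DL_inv]; exact meet_le_left' _ _)
      exact le_trans (by simpa using this) h2
    · have : S.le (α * (S.DL y)⁻¹) (α * y) :=
        (mul_le_mul_left_iff α).2 (by rw [DL_inv]; exact meet_le_right' _ _)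
      rw [hα] at this
      exact le_trans this ((mul_le_mul_left_iff x).2 h2)

theorem transport_conj {x y α : G} (hα : α * y = x * α) :
    (S.DL x * α * (S.DL y)⁻¹) * S.swap y = S.swap x * (S.DL x * α * (S.DL y)⁻¹) := by
  simp only [swap, mul_assoc, inv_mul_cancel_left]
  rw [← mul_assoc α, hα, mul_assoc]

theorem iterate_transport_mem_interval {p q : ℤ} (n : ℕ) {x y α : G} (hα : α * y = x * α)
    (h1 : S.le (S.delta ^ p) α) (h2 : S.le α (S.delta ^ q)) :
    S.le (S.delta ^ p) (S.swapDen n x * α * (S.swapDen n y)⁻¹) ∧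
      S.le (S.swapDen n x * α * (S.swapDen n y)⁻¹) (S.delta ^ q) := by
  induction n generalizing x y α with
  | zero => simpa [swapDen] using ⟨h1, h2⟩
  | succ n ih =>
    have h := S.transport_mem_interval hα h1 h2
    simpa [swapDen, mul_assoc] using ih (S.transport_conj hα) h.1 h.2

theorem swapDen_transport_eq_swapNum (n : ℕ) {x y α : G} (hα : α * y = x * α) :
    S.swapDen n x * α * (S.swapDen n y)⁻¹ = S.swapNum n x * α * (S.swapNum n y)⁻¹ := by
  induction n generalizing x y α with
  | zero => rfl
  | succ n ih =>
    have h := ih (S.transport_conj hα)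
    have hN : S.DL x * α * (S.DL y)⁻¹ = S.NL x * α * (S.NL y)⁻¹ := by
      rw [NL, NL, mul_assoc (S.DL x) x, ← hα]; simp [mul_assoc]
    calc _ = S.swapDen n (S.swap x) * (S.DL x * α * (S.DL y)⁻¹) *
          (S.swapDen n (S.swap y))⁻¹ := by simp [swapDen, mul_assoc]
      _ = _ := by rw [h, hN]; simp [swapNum, mul_assoc]

end Swap

section Support

theorem atoms_finite : S.atoms.Finite :=
  S.divDelta_finite.subset fun a ha => ⟨ha.1, S.atoms_divide_delta a ha.1 ha.2.1 ha.2.2⟩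

theorem exists_lub {X : Set G} (hX : X.Finite) (hpos : X ⊆ S.pos) :
    ∃ d : G, (∀ x ∈ X, S.le x d) ∧ S.le 1 d ∧
      ∀ c : G, S.le 1 c → (∀ x ∈ X, S.le x c) → S.le d c := by
  induction X, hX using Set.Finite.induction_on with
  | empty => exact ⟨1, by simp, S.le_refl 1, fun c hc _ => hc⟩
  | @insert a X _ _ ih =>
    obtain ⟨d, hd, hd1, hmin⟩ := ih fun x hx => hpos (Set.mem_insert_of_mem _ hx)
    have hdj : S.le d (S.join a d) := S.le_join_right a d
    refine ⟨S.join a d, ?_, le_trans hd1 hdj, fun c hc1 hc => ?_⟩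
    · rintro x (rfl | hx)
      · exact S.le_join_left _ d
      · exact le_trans (hd x hx) hdj
    · exact S.join_le a d c (hc a (Set.mem_insert _ _))
        (hmin c hc1 fun x hx => hc x (Set.mem_insert_of_mem _ hx))

/-- `Δ_X` is the least positive upper bound of a set `X` of atoms. -/
theorem deltaOf_spec {X : Set G} (hX : X ⊆ S.atoms) :
    (∀ x ∈ X, S.le x (S.deltaOf X)) ∧ S.le 1 (S.deltaOf X) ∧
      ∀ c : G, S.le 1 c → (∀ x ∈ X, S.le x c) → S.le (S.deltaOf X) c := by
  by_cases h : ∃ d : G, (∀ x ∈ X, S.le x d) ∧ ∀ c : G, (∀ x ∈ X, S.le x c) → S.le d c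
  · rw [deltaOf, dif_pos h]
    obtain ⟨hub, hmin⟩ := h.choose_spec
    refine ⟨hub, ?_, fun c _ hc => hmin c hc⟩
    rcases X.eq_empty_or_nonempty with rfl | ⟨a, ha⟩
    · have := hmin (h.choose * h.choose) (by simp)
      simpa [le] using this
    · exact le_trans (by simpa [le] using (hX ha).1) (hub a ha)
  · rw [deltaOf, dif_neg h]
    obtain ⟨d, hd, -, hmin⟩ := S.exists_lub (S.atoms_finite.subset hX) fun x hx => (hX hx).1
    rcases X.eq_empty_or_nonempty with rfl | ⟨a, ha⟩
    · exact ⟨by simp, S.le_refl 1, fun c hc _ => hc⟩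
    · exact (h ⟨d, hd, fun c hc => hmin c
        (le_trans (by simpa [le] using (hX ha).1) (hc a ha)) hc⟩).elim

theorem closureOf_subset_atoms (X : Set G) : S.closureOf X ⊆ S.atoms := Set.inter_subset_right

theorem subset_closureOf {X : Set G} (hX : X ⊆ S.atoms) : X ⊆ S.closureOf X :=
  fun x hx => ⟨⟨(hX hx).1, (S.deltaOf_spec hX).1 x hx⟩, hX hx⟩

theorem closureOf_subset_closureOf {X Y : Set G} (hX : X ⊆ S.atoms) (hY : Y ⊆ S.atoms)
    (h : X ⊆ S.closureOf Y) : S.closureOf X ⊆ S.closureOf Y := by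
  rintro a ⟨⟨hpos, hle⟩, ha⟩
  exact ⟨⟨hpos, le_trans hle ((S.deltaOf_spec hX).2.2 _ (S.deltaOf_spec hY).2.1
    fun x hx => (h hx).1.2)⟩, ha⟩

theorem closureOf_closureOf {X : Set G} (hX : X ⊆ S.atoms) :
    S.closureOf (S.closureOf X) = S.closureOf X :=
  (S.closureOf_subset_closureOf (S.closureOf_subset_atoms X) hX subset_rfl).antisymm
    (S.subset_closureOf (S.closureOf_subset_atoms X))

theorem exists_atom_factorization {g : G} (hg : g ∈ S.pos) :
    ∃ l : List G, (∀ a ∈ l, a ∈ S.atoms) ∧ l.prod = g :=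
  Submonoid.exists_list_of_mem_closure (s := S.atoms) (S.atoms_generate.symm ▸ hg)

/-- The support is the closure of the atoms of some factorizations of denominator and numerator. -/
theorem supp_spec (x : G) : ∃ l₁ l₂ : List G,
    (∀ a ∈ l₁, a ∈ S.atoms) ∧ (∀ a ∈ l₂, a ∈ S.atoms) ∧ l₁.prod = S.DL x ∧ l₂.prod = S.NL x ∧
      S.supp x = S.closureOf ({a : G | a ∈ l₁} ∪ {a : G | a ∈ l₂}) := by
  have h : ∃ p : List G × List G,
      (∀ a ∈ p.1, a ∈ S.atoms) ∧ (∀ a ∈ p.2, a ∈ S.atoms) ∧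
      p.1.prod = S.DL x ∧ p.2.prod = S.NL x := by
    obtain ⟨l₁, h₁, h₁'⟩ := S.exists_atom_factorization (S.DL_pos x)
    obtain ⟨l₂, h₂, h₂'⟩ := S.exists_atom_factorization (S.NL_pos x)
    exact ⟨(l₁, l₂), h₁, h₂, h₁', h₂'⟩
  obtain ⟨h₁, h₂, h₁', h₂'⟩ := h.choose_spec
  exact ⟨_, _, h₁, h₂, h₁', h₂', by rw [supp, dif_pos h]⟩

theorem supp_subset_atoms (x : G) : S.supp x ⊆ S.atoms := by
  obtain ⟨l₁, l₂, -, -, -, -, h⟩ := S.supp_spec x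
  exact h ▸ S.closureOf_subset_atoms _

theorem closureOf_supp (x : G) : S.closureOf (S.supp x) = S.supp x := by
  obtain ⟨l₁, l₂, h₁, h₂, -, -, h⟩ := S.supp_spec x
  have hsub : {a : G | a ∈ l₁} ∪ {a : G | a ∈ l₂} ⊆ S.atoms := Set.union_subset h₁ h₂
  rw [h, S.closureOf_closureOf hsub]

theorem isStandardParabolic_GX_supp (x : G) : S.IsStandardParabolic (S.GX (S.supp x)) :=
  ⟨_, S.supp_subset_atoms x, S.closureOf_supp x, rfl⟩

theorem mem_GX_supp (x : G) : x ∈ S.GX (S.supp x) := by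
  obtain ⟨l₁, l₂, h₁, h₂, h₁', h₂', h⟩ := S.supp_spec x
  have hsub : ({a : G | a ∈ l₁} ∪ {a : G | a ∈ l₂}) ⊆ (S.GX (S.supp x) : Set G) := by
    have hatoms : {a : G | a ∈ l₁} ∪ {a : G | a ∈ l₂} ⊆ S.atoms := Set.union_subset h₁ h₂
    refine (S.subset_closureOf hatoms).trans ?_
    rw [← h, GX, closureOf_supp]
    exact Subgroup.subset_closure
  have hx : x = l₁.prod⁻¹ * l₂.prod := by rw [h₁', h₂', ← S.eq_DL_inv_mul_NL x]
  have : l₁.prod⁻¹ * l₂.prod ∈ S.GX (S.supp x) := mul_mem (inv_mem (list_prod_mem fun a ha => hsub (Or.inl ha)))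
    (list_prod_mem fun a ha => hsub (Or.inr ha))
  rwa [← hx] at this

end Support

section LCM

variable {S}

theorem IsLCM.mem_closureOf_of_prod_mem_GX (hLCM : S.IsLCM) {X : Set G} (hX : X ⊆ S.atoms) {l : List G}
    (hl : ∀ a ∈ l, a ∈ S.atoms) (hprod : l.prod ∈ S.GX X) : ∀ a ∈ l, a ∈ S.closureOf X := by
  induction l with
  | nil => simp
  | cons b l ih =>
    have hb := hl b List.mem_cons_self
    have hl' : ∀ a ∈ l, a ∈ S.atoms := fun a ha => hl a (List.mem_cons_of_mem _ ha)
    have hlpos : l.prod ∈ S.pos := list_prod_mem fun a ha => (hl' a ha).1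
    rw [List.prod_cons] at hprod
    obtain ⟨hbX, hlX⟩ := hLCM.factor_closed X hX _ hprod (S.pos.mul_mem hb.1 hlpos) _ _
      hb.1 hlpos rfl
    have hbc : b ∈ S.closureOf X := by
      refine ⟨?_, hb⟩
      rw [hLCM.div_eq X hX]
      exact ⟨⟨hb.1, S.atoms_divide_delta b hb.1 hb.2.1 hb.2.2⟩, hbX, hb.1⟩
    intro a ha
    rcases List.mem_cons.1 ha with rfl | ha
    · exact hbc
    · exact ih hl' hlX a ha

theorem IsLCM.GX_supp_le_iff (hLCM : S.IsLCM) {X : Set G} (hX : X ⊆ S.atoms) {x : G} :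
    S.GX (S.supp x) ≤ S.GX X ↔ x ∈ S.GX X := by
  refine ⟨fun h => h (S.mem_GX_supp x), fun hx => ?_⟩
  obtain ⟨l₁, l₂, h₁, h₂, h₁', h₂', h⟩ := S.supp_spec x
  obtain ⟨hD, hN⟩ := hLCM.fraction_closed X hX x hx
  rw [GX, closureOf_supp, h]
  exact Subgroup.closure_mono (S.closureOf_subset_closureOf (Set.union_subset h₁ h₂) hX
    (Set.union_subset (hLCM.mem_closureOf_of_prod_mem_GX hX h₁ (h₁' ▸ hD))
      (hLCM.mem_closureOf_of_prod_mem_GX hX h₂ (h₂' ▸ hN))))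

theorem IsLCM.swap_mem_GX (hLCM : S.IsLCM) {X : Set G} (hX : X ⊆ S.atoms) {x : G} (hx : x ∈ S.GX X) :
    S.swap x ∈ S.GX X := by
  have hD := (hLCM.fraction_closed X hX x hx).1
  exact mul_mem (mul_mem hD hx) (inv_mem hD)

theorem IsLCM.swapDen_mem_GX (hLCM : S.IsLCM) {X : Set G} (hX : X ⊆ S.atoms) (n : ℕ) {x : G}
    (hx : x ∈ S.GX X) : S.swapDen n x ∈ S.GX X := by
  induction n generalizing x with
  | zero => exact one_mem _
  | succ n ih => exact mul_mem (ih (hLCM.swap_mem_GX hX hx)) (hLCM.fraction_closed X hX x hx).1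

theorem IsLCM.swapNum_mem_GX (hLCM : S.IsLCM) {X : Set G} (hX : X ⊆ S.atoms) (n : ℕ) {x : G}
    (hx : x ∈ S.GX X) : S.swapNum n x ∈ S.GX X := by
  induction n generalizing x with
  | zero => exact one_mem _
  | succ n ih => exact mul_mem (ih (hLCM.swap_mem_GX hX hx)) (hLCM.fraction_closed X hX x hx).2

/-- The positive element `swapDen n x * swapNum n x` has the same support subgroup as `x`. -/
theorem IsLCM.GX_supp_swapDen_mul_swapNum (hLCM : S.IsLCM) {n : ℕ} (hn : 0 < n) (x : G) :
    S.GX (S.supp (S.swapDen n x * S.swapNum n x)) = S.GX (S.supp x) := by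
  apply _root_.le_antisymm
  · rw [hLCM.GX_supp_le_iff (S.supp_subset_atoms x)]
    exact mul_mem (hLCM.swapDen_mem_GX (S.supp_subset_atoms x) n (S.mem_GX_supp x))
      (hLCM.swapNum_mem_GX (S.supp_subset_atoms x) n (S.mem_GX_supp x))
  · set g := S.swapDen n x * S.swapNum n x with hg
    have hX := S.supp_subset_atoms g
    rw [hLCM.GX_supp_le_iff hX]
    have hDpos := S.swapDen_pos n x
    have hNpos := S.swapNum_pos n x
    obtain ⟨hD, hN⟩ := hLCM.factor_closed _ hX g (S.mem_GX_supp g)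
      (S.pos.mul_mem hDpos hNpos) _ _ hDpos hNpos hg
    obtain ⟨k, rfl⟩ := Nat.exists_eq_succ_of_ne_zero hn.ne'
    have hD' := (hLCM.factor_closed _ hX _ hD hDpos _ _ (S.swapDen_pos k _) (S.DL_pos x) rfl).2
    have hN' := (hLCM.factor_closed _ hX _ hN hNpos _ _ (S.swapNum_pos k _) (S.NL_pos x) rfl).2
    rw [S.eq_DL_inv_mul_NL x]
    exact mul_mem (inv_mem hD') hN'

/-- Conjugations between recurrent elements conjugate the support subgroups. -/
theorem IsLCM.mem_GX_supp_conj_iff (hLCM : S.IsLCM) (hsp : S.SupportPreserving) {x y α : G}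
    (hx : S.Recurrent x) (hy : S.Recurrent y) (hα : α * y = x * α) (g : G) :
    g ∈ S.GX (S.supp y) ↔ α * g * α⁻¹ ∈ S.GX (S.supp x) := by
  obtain ⟨m₁, hm₁, hx⟩ := hx
  obtain ⟨m₂, hm₂, hy⟩ := hy
  have hxk : ∀ k, S.swap^[k * (m₁ * m₂)] x = x := fun k =>
    (Function.IsPeriodicPt.mul_const hx m₂).const_mul k
  have hyk : ∀ k, S.swap^[k * (m₁ * m₂)] y = y := fun k =>
    (Function.IsPeriodicPt.const_mul hy m₁).const_mul k
  obtain ⟨p, q, hpq, h1, h2⟩ := S.delta_bounds α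
  obtain ⟨i, j, hij, h⟩ := (S.finite_delta_zpow_interval hpq).exists_lt_map_eq_of_forall_mem
    fun k => S.iterate_transport_mem_interval (k * (m₁ * m₂)) hα h1 h2
  obtain ⟨d, rfl⟩ := Nat.exists_eq_add_of_lt hij
  set n := (d + 1) * (m₁ * m₂) with hn
  have hnpos : 0 < n := by positivity
  have hsum : (i + d + 1) * (m₁ * m₂) = n + i * (m₁ * m₂) := by rw [hn]; ring
  rw [hsum, swapDen_add, swapDen_add, hxk, hyk] at h
  have hax := S.swap_iterate_eq (i * (m₁ * m₂)) x
  have hay := S.swap_iterate_eq (i * (m₁ * m₂)) y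
  rw [hxk] at hax
  rw [hyk] at hay
  have haX := hLCM.swapDen_mem_GX (S.supp_subset_atoms x) (i * (m₁ * m₂)) (S.mem_GX_supp x)
  have haY := hLCM.swapDen_mem_GX (S.supp_subset_atoms y) (i * (m₁ * m₂)) (S.mem_GX_supp y)
  set a := S.swapDen (i * (m₁ * m₂)) x
  set b := S.swapDen (i * (m₁ * m₂)) y
  obtain ⟨β, hβ⟩ : ∃ β, β = a * α * b⁻¹ := ⟨_, rfl⟩
  have hαβ : α = a⁻¹ * β * b := by rw [hβ]; group
  have hβxy : β * y = x * β := by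
    have hay' : b⁻¹ * y = y * b⁻¹ := by
      rw [eq_mul_inv_iff_mul_eq] at hay
      rw [inv_mul_eq_iff_eq_mul, ← mul_assoc, ← hay, mul_inv_cancel_right]
    have hax' : a * x = x * a := by
      rw [eq_mul_inv_iff_mul_eq] at hax
      exact hax.symm
    rw [hβ, mul_assoc, hay', ← mul_assoc, mul_assoc a, hα, ← mul_assoc, hax']
    simp only [mul_assoc]
  have hden : S.swapDen n x * β * (S.swapDen n y)⁻¹ = β := by
    rw [hβ]
    nth_rewrite 2 [h]
    group
  have hnum : S.swapNum n x * β * (S.swapNum n y)⁻¹ = β := by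
    rw [← S.swapDen_transport_eq_swapNum n hβxy, hden]
  have hconj : β⁻¹ * (S.swapDen n x * S.swapNum n x) * β = S.swapDen n y * S.swapNum n y := by
    rw [mul_inv_eq_iff_eq_mul] at hden hnum
    rw [mul_assoc, mul_assoc, hnum, ← mul_assoc (S.swapDen n x), hden, ← mul_assoc, ← mul_assoc,
      inv_mul_cancel, one_mul]
  have key := hsp _ (S.pos.mul_mem (S.swapDen_pos n x) (S.swapNum_pos n x)) _
    (S.pos.mul_mem (S.swapDen_pos n y) (S.swapNum_pos n y)) β hconj
  rw [hLCM.GX_supp_swapDen_mul_swapNum hnpos, hLCM.GX_supp_swapDen_mul_swapNum hnpos] at key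
  have hβg : ∀ g, g ∈ S.GX (S.supp y) ↔ β * g * β⁻¹ ∈ S.GX (S.supp x) := by
    intro g
    rw [← key, Subgroup.mem_map]
    constructor
    · rintro ⟨w, hw, rfl⟩
      simpa [mul_assoc] using hw
    · exact fun hw => ⟨_, hw, by simp [mul_assoc]⟩
  have hg : α * g * α⁻¹ = a⁻¹ * (β * (b * g * b⁻¹) * β⁻¹) * a := by rw [hαβ]; group
  rw [hg, Subgroup.mul_mem_cancel_right _ haX, Subgroup.mul_mem_cancel_left _ (inv_mem haX), ← hβg,
    Subgroup.mul_mem_cancel_right _ (inv_mem haY), Subgroup.mul_mem_cancel_left _ haY]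

/-- If `c⁻¹ * x * c` is recurrent, then conjugating its support subgroup by `c` gives the
parabolic closure of `x`. -/
theorem IsLCM.isParabolicClosure_of_recurrent_conj (hLCM : S.IsLCM)
    (hsp : S.SupportPreserving) {x r c : G}
    (hr : S.Recurrent r) (hc : c * r = x * c) :
    S.IsParabolicClosure x
      (Subgroup.map (MulAut.conj c).toMonoidHom (S.GX (S.supp r))) := by
  refine ⟨⟨_, c, S.isStandardParabolic_GX_supp r, rfl⟩,
    ⟨r, S.mem_GX_supp r, by simp [hc]⟩, ?_⟩
  rintro _ ⟨_, e, ⟨X, hX, -, rfl⟩, rfl⟩ ⟨y, hy, hxy⟩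
  have hxy : e * y * e⁻¹ = x := by simpa using hxy
  rintro _ ⟨g, hg, rfl⟩
  obtain ⟨n, hn⟩ := S.exists_recurrent_iterate y
  have heq := S.swap_iterate_eq n y
  have hdX := hLCM.swapDen_mem_GX hX n hy
  set d := S.swapDen n y
  have hzX : S.swap^[n] y ∈ S.GX X := heq ▸ mul_mem (mul_mem hdX hy) (inv_mem hdX)
  have hα : (d * e⁻¹ * c) * r = S.swap^[n] y * (d * e⁻¹ * c) := by
    rw [mul_assoc _ c, hc, heq, ← hxy]
    group
  have hmem := (hLCM.GX_supp_le_iff hX).2 hzX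
    ((hLCM.mem_GX_supp_conj_iff hsp hn hr hα g).1 hg)
  refine ⟨d⁻¹ * ((d * e⁻¹ * c) * g * (d * e⁻¹ * c)⁻¹) * d,
    mul_mem (mul_mem (inv_mem hdX) hmem) hdX, ?_⟩
  simp only [MulEquiv.toMonoidHom_eq_coe, MonoidHom.coe_coe, MulAut.conj_apply]
  group

end LCM

end GarsideStructure

/-- in a support-preserving LCM-Garside structure every element admits a
parabolic closure; moreover for a recurrent element it is `G_{Supp(x)}`. -/
theorem garside_parabolic_closure_exists {G : Type*} [Group G]
    (S : GarsideStructure G) (hLCM : S.IsLCM) (hsp : S.SupportPreserving) (x : G) :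
    ∃ P : Subgroup G, S.IsParabolic P ∧ x ∈ P ∧
      (∀ H : Subgroup G, S.IsParabolic H → x ∈ H → P ≤ H) ∧
      (S.Recurrent x → P = S.GX (S.supp x)) := by
  by_cases hx : S.Recurrent x
  · obtain ⟨hP, hxP, hmin⟩ :=
      hLCM.isParabolicClosure_of_recurrent_conj hsp hx (c := 1) (x := x) (by simp)
    exact ⟨_, hP, hxP, hmin, fun _ => by ext; simp⟩
  · obtain ⟨n, hn⟩ := S.exists_recurrent_iterate x
    obtain ⟨hP, hxP, hmin⟩ := hLCM.isParabolicClosure_of_recurrent_conj hsp hn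
      (c := (S.swapDen n x)⁻¹) (x := x) (by rw [S.swap_iterate_eq]; group)
    exact ⟨_, hP, hxP, hmin, fun h => (hx h).elim⟩
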